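/- Let $Z \sim N_p(0,\Sigma)$ with $\Sigma \in \mathcal{F}_\alpha$, and let coefficients $\bar{B}^{(\tau)}_{ij}$ satisfy $0 \le \bar{B}^{(\tau)}_{ij} \le C_n$ and $\bar{B}^{(\tau)}_{ij} = 0$ for $|i-j| \ge \tau$. Define $U = \frac{1}{n^2}\sum_{1\le i,j\le p} \bar{B}^{(\tau)}_{ij}\{\sigma_{ii}(z_j^2-\sigma_{jj}) + \sigma_{jj}(z_i^2-\sigma_{ii})\}$. Then for any even $K_0 \ge 2$ there exists $C$ such that $\mathbb{E}[U^{K_0}] \le C\,(C_n\tau)^{K_0} p^{K_0/2}/n^{2K_0}$ for all $n \ge 3$ and $1 \le \tau \le p$. -/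

import Mathlib

open MeasureTheory ProbabilityTheory Finset

noncomputable section

/-- `Z` is a centered Gaussian vector with covariance matrix `S`. -/
def IsGaussianVec {Ω : Type*} [MeasureSpace Ω] {p : ℕ}
    (Z : Ω → Fin p → ℝ) (S : Matrix (Fin p) (Fin p) ℝ) : Prop :=
  ∀ a : Fin p → ℝ,
    Measure.map (fun ω => ∑ i, a i * Z ω i) (ℙ : Measure Ω)
      = gaussianReal 0 (∑ i, ∑ j, a i * S i j * a j).toNNReal

/-!
Collecting terms, `n² U = ∑ i, wᵢ (zᵢ² - σᵢᵢ)`, where banding leaves at most `2τ` terms in each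
weight, so that `|wᵢ| ≤ 4 τ Cₙ M₀`. With `W = diag w` and `z = Σ^(1/2) g` for a standard Gaussian
`g`, this is the centered quadratic form of `Q = Σ^(1/2) W Σ^(1/2)` in `g`, which an orthonormal
eigenbasis of `Q` turns into a sum `∑ k, λₖ (gₖ² - 1)` with independent terms. Once scaled to
`∑ λₖ² ≤ 1/16`, the sum and its opposite have exponential moments at most `exp (4 ∑ λₖ²)`, and
`x^(2m) ≤ (2m)! cosh x` bounds the `2m`-th moment; scaling back gives a multiple of
`(∑ λₖ²)^m = tr(WΣWΣ)^m`. Finally `tr(WΣWΣ) ≤ max wᵢ² · tr(Σ²) ≤ (4 τ Cₙ M₀)² · p M₀²`.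
-/

lemma pow_two_mul_le_factorial_mul_cosh (m : ℕ) (x : ℝ) :
    x ^ (2 * m) ≤ (2 * m).factorial * Real.cosh x := by
  have hterm : ∀ k : ℕ, 0 ≤ x ^ (2 * k) / (2 * k).factorial := fun k =>
    div_nonneg ((even_two_mul k).pow_nonneg x) (Nat.cast_nonneg _)
  have h := le_hasSum (Real.hasSum_cosh x) m fun k _ => hterm k
  rwa [div_le_iff₀' (by positivity)] at h

lemma integral_pow_two_mul_le_of_integral_exp_le {Ω : Type*} [MeasurableSpace Ω] {μ : Measure Ω}
    {X : Ω → ℝ} {c : ℝ} (hint : Integrable (fun ω => Real.exp (X ω)) μ)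
    (hint_neg : Integrable (fun ω => Real.exp (-X ω)) μ)
    (hc : ∫ ω, Real.exp (X ω) ∂μ ≤ c) (hc_neg : ∫ ω, Real.exp (-X ω) ∂μ ≤ c) (m : ℕ) :
    ∫ ω, X ω ^ (2 * m) ∂μ ≤ (2 * m).factorial * c := by
  have hcosh_int : Integrable (fun ω => Real.cosh (X ω)) μ := by
    simp only [Real.cosh_eq]
    exact (hint.add hint_neg).div_const 2
  have hcosh_le : ∫ ω, Real.cosh (X ω) ∂μ ≤ c := by
    simp only [Real.cosh_eq]
    rw [integral_div, integral_add hint hint_neg]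
    linarith
  calc ∫ ω, X ω ^ (2 * m) ∂μ ≤ ∫ ω, (2 * m).factorial * Real.cosh (X ω) ∂μ :=
        integral_mono_of_nonneg (ae_of_all _ fun ω => (even_two_mul m).pow_nonneg _)
          (hcosh_int.const_mul _)
          (ae_of_all _ fun ω => pow_two_mul_le_factorial_mul_cosh m (X ω))
    _ ≤ (2 * m).factorial * c := by
        rw [integral_const_mul]
        gcongr

lemma inv_sqrt_one_sub_mul_exp_neg_half_le {x : ℝ} (hx : x ≤ 1 / 2) :
    (√(1 - x))⁻¹ * Real.exp (-x / 2) ≤ Real.exp (x ^ 2) := by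
  have hpos : 0 < 1 - x := by linarith
  have hsq : 1 ≤ (1 - x) * Real.exp (x + 2 * x ^ 2) := calc
    1 ≤ (1 - x) * (x + 2 * x ^ 2 + 1) := by
      nlinarith [mul_nonneg (sq_nonneg x) (sub_nonneg.2 hx)]
    _ ≤ (1 - x) * Real.exp (x + 2 * x ^ 2) := by
      gcongr
      exact Real.add_one_le_exp _
  rw [inv_mul_le_iff₀ (Real.sqrt_pos.2 hpos)]
  refine le_of_sq_le_sq ?_ (by positivity)
  calc Real.exp (-x / 2) ^ 2 = Real.exp (-x) := by
        rw [← Real.exp_nat_mul]; congr 1; push_cast; ring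
    _ ≤ (1 - x) * Real.exp (x + 2 * x ^ 2) * Real.exp (-x) :=
        le_mul_of_one_le_left (Real.exp_nonneg _) hsq
    _ = (√(1 - x) * Real.exp (x ^ 2)) ^ 2 := by
        rw [mul_pow, Real.sq_sqrt hpos.le, ← Real.exp_nat_mul, mul_assoc, ← Real.exp_add]
        congr 2; push_cast; ring

lemma gaussianPDFReal_zero_one_mul_exp_mul_sq (s x : ℝ) :
    gaussianPDFReal 0 1 x * Real.exp (s * x ^ 2)
      = (√(2 * Real.pi))⁻¹ * Real.exp (-(1 / 2 - s) * x ^ 2) := by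
  simp only [gaussianPDFReal, NNReal.coe_one, mul_one, sub_zero]
  rw [mul_assoc, ← Real.exp_add]
  congr 2
  ring

lemma integrable_exp_mul_sq_gaussianReal {s : ℝ} (hs : s < 1 / 2) :
    Integrable (fun x : ℝ => Real.exp (s * x ^ 2)) (gaussianReal 0 1) := by
  rw [gaussianReal_of_var_ne_zero 0 one_ne_zero,
    integrable_withDensity_iff_integrable_smul' (measurable_gaussianPDF 0 1)
      (ae_of_all _ fun _ => gaussianPDF_lt_top)]
  simp only [toReal_gaussianPDF, smul_eq_mul, gaussianPDFReal_zero_one_mul_exp_mul_sq]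
  exact (integrable_exp_neg_mul_sq (sub_pos.2 hs)).const_mul _

lemma integral_exp_mul_sq_gaussianReal {s : ℝ} (hs : s < 1 / 2) :
    ∫ x, Real.exp (s * x ^ 2) ∂gaussianReal 0 1 = (√(1 - 2 * s))⁻¹ := by
  have h : 1 - 2 * s ≠ 0 := by linarith
  rw [integral_gaussianReal_eq_integral_smul one_ne_zero]
  simp only [smul_eq_mul, gaussianPDFReal_zero_one_mul_exp_mul_sq]
  rw [integral_const_mul, integral_gaussian, ← Real.sqrt_inv, ← Real.sqrt_inv,
    ← Real.sqrt_mul (by positivity)]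
  congr 1
  field_simp

lemma exp_mul_sq_sub_one (a x : ℝ) :
    Real.exp (a * (x ^ 2 - 1)) = Real.exp (a * x ^ 2) * Real.exp (-(2 * a) / 2) := by
  rw [← Real.exp_add]
  congr 1
  ring

lemma integrable_exp_mul_sq_sub_one_gaussianReal {a : ℝ} (ha : a < 1 / 2) :
    Integrable (fun x : ℝ => Real.exp (a * (x ^ 2 - 1))) (gaussianReal 0 1) := by
  simp only [exp_mul_sq_sub_one]
  exact (integrable_exp_mul_sq_gaussianReal ha).mul_const _

lemma integral_exp_mul_sq_sub_one_gaussianReal_le {a : ℝ} (ha : a ≤ 1 / 4) :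
    ∫ x, Real.exp (a * (x ^ 2 - 1)) ∂gaussianReal 0 1 ≤ Real.exp (4 * a ^ 2) := by
  simp only [exp_mul_sq_sub_one]
  rw [integral_mul_const, integral_exp_mul_sq_gaussianReal (by linarith),
    show 4 * a ^ 2 = (2 * a) ^ 2 by ring]
  exact inv_sqrt_one_sub_mul_exp_neg_half_le (by linarith)

section

variable {ι : Type*} [Fintype ι]

lemma integrable_exp_sum_mul_sq_sub_one_pi {a : ι → ℝ} (ha : ∀ i, a i < 1 / 2) :
    Integrable (fun x : ι → ℝ => Real.exp (∑ i, a i * (x i ^ 2 - 1)))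
      (Measure.pi fun _ => gaussianReal 0 1) := by
  simp only [Real.exp_sum]
  exact Integrable.fintype_prod fun i => integrable_exp_mul_sq_sub_one_gaussianReal (ha i)

lemma integral_exp_sum_mul_sq_sub_one_pi_le {a : ι → ℝ} (ha : ∀ i, a i ≤ 1 / 4) :
    ∫ x : ι → ℝ, Real.exp (∑ i, a i * (x i ^ 2 - 1)) ∂(Measure.pi fun _ => gaussianReal 0 1)
      ≤ Real.exp (4 * ∑ i, a i ^ 2) := by
  simp only [Real.exp_sum, mul_sum]
  rw [integral_fintype_prod_eq_prod (𝕜 := ℝ) fun i x => Real.exp (a i * (x ^ 2 - 1))]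
  exact prod_le_prod (fun i _ => integral_nonneg fun x => Real.exp_nonneg _)
    fun i _ => integral_exp_mul_sq_sub_one_gaussianReal_le (ha i)

/-- The constant in the bound for the `2m`-th moment of a centered Gaussian quadratic form by the
`m`-th power of half its variance. -/
def gaussianChaosConst (m : ℕ) : ℝ := (2 * m).factorial * Real.exp (1 / 4) * 16 ^ m

lemma gaussianChaosConst_pos (m : ℕ) : 0 < gaussianChaosConst m := by
  rw [gaussianChaosConst]
  positivity

lemma integral_sum_mul_sq_sub_one_pow_le_of_sum_sq_le {a : ι → ℝ}
    (ha : ∑ i, a i ^ 2 ≤ 1 / 16) (m : ℕ) :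
    ∫ x : ι → ℝ, (∑ i, a i * (x i ^ 2 - 1)) ^ (2 * m) ∂(Measure.pi fun _ => gaussianReal 0 1)
      ≤ (2 * m).factorial * Real.exp (1 / 4) := by
  have ha_abs (i : ι) : |a i| ≤ 1 / 4 := by
    refine abs_le_of_sq_le_sq ?_ (by norm_num)
    linarith [single_le_sum (fun i _ => sq_nonneg (a i)) (mem_univ i)]
  have hexp {b : ι → ℝ} (hb : ∀ i, |b i| = |a i|) :
      Integrable (fun x : ι → ℝ => Real.exp (∑ i, b i * (x i ^ 2 - 1)))
        (Measure.pi fun _ => gaussianReal 0 1) ∧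
      ∫ x : ι → ℝ, Real.exp (∑ i, b i * (x i ^ 2 - 1)) ∂(Measure.pi fun _ => gaussianReal 0 1)
        ≤ Real.exp (1 / 4) := by
    have hb_le (i : ι) : b i ≤ 1 / 4 := (le_abs_self _).trans ((hb i).trans_le (ha_abs i))
    refine ⟨integrable_exp_sum_mul_sq_sub_one_pi fun i => (hb_le i).trans_lt (by norm_num),
      (integral_exp_sum_mul_sq_sub_one_pi_le hb_le).trans (Real.exp_le_exp.2 ?_)⟩
    simp only [fun i => (sq_eq_sq_iff_abs_eq_abs (b i) (a i)).2 (hb i)]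
    linarith
  have hneg (x : ι → ℝ) : -∑ i, a i * (x i ^ 2 - 1) = ∑ i, -a i * (x i ^ 2 - 1) := by
    simp only [neg_mul, sum_neg_distrib]
  obtain ⟨hint, hle⟩ := hexp fun _ => rfl
  obtain ⟨hint_neg, hle_neg⟩ := hexp fun i => abs_neg (a i)
  simp only [← hneg] at hint_neg hle_neg
  exact integral_pow_two_mul_le_of_integral_exp_le hint hint_neg hle hle_neg m

lemma integral_sum_mul_sq_sub_one_pow_le (l : ι → ℝ) (m : ℕ) :
    ∫ x : ι → ℝ, (∑ i, l i * (x i ^ 2 - 1)) ^ (2 * m) ∂(Measure.pi fun _ => gaussianReal 0 1)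
      ≤ gaussianChaosConst m * (∑ i, l i ^ 2) ^ m := by
  set V := ∑ i, l i ^ 2 with hV
  have hV_nonneg : 0 ≤ V := sum_nonneg fun i _ => sq_nonneg (l i)
  set c := √(16 * V)
  have hc_sq : c ^ 2 = 16 * V := Real.sq_sqrt (mul_nonneg (by norm_num) hV_nonneg)
  have hl (i : ι) : l i = c * (l i / c) := by
    refine (mul_div_cancel_of_imp' fun hc0 => ?_).symm
    have hV0 : V ≤ 0 := by nlinarith
    have := single_le_sum (fun i _ => sq_nonneg (l i)) (mem_univ i)
    exact pow_eq_zero_iff two_ne_zero |>.1 (le_antisymm (this.trans hV0) (sq_nonneg _))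
  have hsum_sq : ∑ i, (l i / c) ^ 2 ≤ 1 / 16 := by
    simp only [div_pow]
    rw [← sum_div, hc_sq, ← hV, mul_comm, div_mul_eq_div_div]
    gcongr
    exact div_self_le_one V
  have hscale (x : ι → ℝ) :
      ∑ i, l i * (x i ^ 2 - 1) = c * ∑ i, l i / c * (x i ^ 2 - 1) := by
    rw [mul_sum]
    exact sum_congr rfl fun i _ => by rw [← mul_assoc, ← hl]
  calc ∫ x : ι → ℝ, (∑ i, l i * (x i ^ 2 - 1)) ^ (2 * m) ∂(Measure.pi fun _ => gaussianReal 0 1)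
      = c ^ (2 * m) * ∫ x : ι → ℝ, (∑ i, l i / c * (x i ^ 2 - 1)) ^ (2 * m)
          ∂(Measure.pi fun _ => gaussianReal 0 1) := by
        simp only [hscale, mul_pow]
        exact integral_const_mul _ _
    _ ≤ c ^ (2 * m) * ((2 * m).factorial * Real.exp (1 / 4)) := by
        gcongr
        exact integral_sum_mul_sq_sub_one_pow_le_of_sum_sq_le hsum_sq m
    _ = gaussianChaosConst m * V ^ m := by
        rw [gaussianChaosConst, pow_mul, hc_sq, mul_pow]
        ring

end

section

open Matrix WithLp
open scoped ComplexOrder RealInnerProductSpace MatrixOrder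

variable {ι : Type*} [Fintype ι]

lemma posSemidef_of_isSymm_of_sum_nonneg {S : Matrix ι ι ℝ} (hS : S.IsSymm)
    (h : ∀ v : ι → ℝ, 0 ≤ ∑ i, ∑ j, v i * S i j * v j) : S.PosSemidef := by
  refine .of_dotProduct_mulVec_nonneg hS fun v => ?_
  simpa only [star_trivial, dotProduct, mulVec, mul_sum, mul_assoc] using h v

lemma trace_mul_nonneg_of_posSemidef {𝕜 : Type*} [RCLike 𝕜] {A B : Matrix ι ι 𝕜} (hA : A.PosSemidef)
    (hB : B.PosSemidef) : 0 ≤ (A * B).trace := by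
  classical
  set R := CFC.sqrt A
  have hR : Rᴴ = R := (CFC.sqrt_nonneg A).isSelfAdjoint
  have htrace : (Rᴴ * B * R).trace = (A * B).trace := by
    rw [hR, trace_mul_comm, ← mul_assoc, CFC.sqrt_mul_sqrt_self A hA.nonneg]
  exact htrace ▸ (hB.conjTranspose_mul_mul_same R).trace_nonneg

variable [DecidableEq ι]

lemma trace_mul_self_eq_sum_sq_eigenvalues {Q : Matrix ι ι ℝ} (hQ : Q.IsHermitian) :
    (Q * Q).trace = ∑ i, hQ.eigenvalues i ^ 2 := by
  conv_lhs => rw [hQ.spectral_theorem, ← map_mul, Unitary.conjStarAlgAut_apply, trace_mul_cycle,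
    Unitary.coe_star_mul_self, one_mul, diagonal_mul_diagonal, trace_diagonal]
  exact sum_congr rfl fun i _ => (sq _).symm

lemma inner_sum_smul_eigenvectorBasis {Q : Matrix ι ι ℝ} (hQ : Q.IsHermitian) (x : ι → ℝ) :
    ⟪∑ i, x i • hQ.eigenvectorBasis i,
      toEuclideanCLM (𝕜 := ℝ) Q (∑ i, x i • hQ.eigenvectorBasis i)⟫
      = ∑ i, hQ.eigenvalues i * x i ^ 2 := by
  have heig (i : ι) : toEuclideanCLM (𝕜 := ℝ) Q (hQ.eigenvectorBasis i)
      = hQ.eigenvalues i • hQ.eigenvectorBasis i := by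
    apply ofLp_injective
    exact hQ.mulVec_eigenvectorBasis i
  simp only [map_sum, map_smul, heig, smul_smul]
  rw [hQ.eigenvectorBasis.orthonormal.inner_sum]
  exact sum_congr rfl fun i _ => by simp only [conj_trivial]; ring

lemma integral_inner_sub_trace_pow_stdGaussian_le {Q : Matrix ι ι ℝ} (hQ : Q.IsHermitian)
    (m : ℕ) :
    ∫ x, (⟪x, toEuclideanCLM (𝕜 := ℝ) Q x⟫ - Q.trace) ^ (2 * m) ∂stdGaussian (EuclideanSpace ℝ ι)
      ≤ gaussianChaosConst m * (Q * Q).trace ^ m := by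
  have htrace : Q.trace = ∑ i, hQ.eigenvalues i := hQ.trace_eq_sum_eigenvalues
  rw [stdGaussian_eq_map_pi_orthonormalBasis hQ.eigenvectorBasis,
    integral_map (by fun_prop : Measurable _).aemeasurable (by fun_prop)]
  simp only [inner_sum_smul_eigenvectorBasis, htrace, ← sum_sub_distrib, ← mul_sub_one,
    trace_mul_self_eq_sum_sq_eigenvalues hQ]
  exact integral_sum_mul_sq_sub_one_pow_le _ m

lemma integral_inner_sub_trace_pow_multivariateGaussian_le {S W : Matrix ι ι ℝ}
    (hS : S.PosSemidef) (hW : W.IsHermitian) (m : ℕ) :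
    ∫ z, (⟪z, toEuclideanCLM (𝕜 := ℝ) W z⟫ - (W * S).trace) ^ (2 * m) ∂multivariateGaussian 0 S
      ≤ gaussianChaosConst m * (W * S * (W * S)).trace ^ m := by
  set R := CFC.sqrt S with hR
  have hR_herm : R.IsHermitian := (CFC.sqrt_nonneg S).isSelfAdjoint
  have hR_sq : R * R = S := CFC.sqrt_mul_sqrt_self S hS.nonneg
  have hQ : (R * W * R).IsHermitian := by
    have := isHermitian_conjTranspose_mul_mul R hW
    rwa [hR_herm.eq] at this
  have htrace : (R * W * R).trace = (W * S).trace := by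
    rw [trace_mul_comm, ← mul_assoc, hR_sq, trace_mul_comm]
  have htrace_sq : (R * W * R * (R * W * R)).trace = (W * S * (W * S)).trace := by
    rw [show R * W * R * (R * W * R) = R * (W * (R * R) * W * R) by simp only [mul_assoc],
      trace_mul_comm, hR_sq, mul_assoc _ R R, hR_sq, mul_assoc (W * S)]
  have hform (x : EuclideanSpace ℝ ι) :
      ⟪toEuclideanCLM (𝕜 := ℝ) R x, toEuclideanCLM (𝕜 := ℝ) W (toEuclideanCLM (𝕜 := ℝ) R x)⟫
        = ⟪x, toEuclideanCLM (𝕜 := ℝ) (R * W * R) x⟫ := by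
    rw [← ContinuousLinearMap.adjoint_inner_right, ← ContinuousLinearMap.star_eq_adjoint,
      ← map_star, star_eq_conjTranspose, hR_herm.eq, map_mul, map_mul]
    rfl
  rw [multivariateGaussian, integral_map (by fun_prop) (by fun_prop)]
  simp only [zero_add, hform, ← hR, ← htrace, ← htrace_sq]
  exact integral_inner_sub_trace_pow_stdGaussian_le hQ m

lemma posSemidef_smul_one_sub_of_isSymm_of_sum_le {S : Matrix ι ι ℝ} {b : ℝ} (hS : S.IsSymm)
    (h : ∀ v : ι → ℝ, ∑ i, ∑ j, v i * S i j * v j ≤ b * ∑ i, v i ^ 2) :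
    (b • 1 - S).PosSemidef := by
  refine posSemidef_of_isSymm_of_sum_nonneg ((isSymm_one.smul b).sub hS) fun v => ?_
  have hscalar : ∑ i, ∑ j, v i * (b • (1 : Matrix ι ι ℝ)) i j * v j = b * ∑ i, v i ^ 2 := by
    simp only [Matrix.smul_apply, one_apply, smul_eq_mul, mul_ite, mul_one, mul_zero, ite_mul,
      zero_mul, sum_ite_eq, mem_univ, if_true, mul_sum]
    exact sum_congr rfl fun i _ => by ring
  simp only [Matrix.sub_apply, mul_sub, sub_mul, sum_sub_distrib, hscalar]
  exact sub_nonneg.2 (h v)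

lemma trace_mul_self_le_card_mul_sq {S : Matrix ι ι ℝ} {b : ℝ} (hS : S.PosSemidef)
    (hSb : (b • 1 - S).PosSemidef) : (S * S).trace ≤ Fintype.card ι * b ^ 2 := by
  set T := b • 1 - S with hT
  have hdecomp : S * S + T * T + (S * T + S * T) = b ^ 2 • (1 : Matrix ι ι ℝ) := by
    simp only [hT, sub_mul, mul_sub, smul_mul_assoc, mul_smul_comm, mul_one, one_mul]
    module
  have htrace := congrArg trace hdecomp
  simp only [trace_add, trace_smul, trace_one, smul_eq_mul] at htrace
  linarith [trace_mul_nonneg_of_posSemidef hSb hSb, trace_mul_nonneg_of_posSemidef hS hSb]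

lemma trace_diagonal_mul_mul_self_le {S : Matrix ι ι ℝ} (hS : S.IsSymm) {w : ι → ℝ} {L : ℝ}
    (hw : ∀ i, |w i| ≤ L) :
    (diagonal w * S * (diagonal w * S)).trace ≤ L ^ 2 * (S * S).trace := by
  have hterm (i j : ι) : w i * S i j * (w j * S j i) ≤ L ^ 2 * (S i j * S j i) := by
    have hww : w i * w j ≤ L ^ 2 := calc
      w i * w j ≤ |w i| * |w j| := abs_mul (w i) (w j) ▸ le_abs_self _
      _ ≤ L * L := mul_le_mul (hw i) (hw j) (abs_nonneg _) ((abs_nonneg _).trans (hw i))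
      _ = L ^ 2 := (sq L).symm
    rw [hS.apply i j, mul_mul_mul_comm]
    exact mul_le_mul_of_nonneg_right hww (mul_self_nonneg _)
  simp only [trace, diag_apply, mul_apply (M := diagonal w * S), mul_apply (M := S), diagonal_mul,
    mul_sum]
  exact sum_le_sum fun i _ => sum_le_sum fun j _ => hterm i j

lemma sum_mul_sq_sub_eq_inner_sub_trace (S : Matrix ι ι ℝ) (w : ι → ℝ) (z : EuclideanSpace ℝ ι) :
    ∑ i, w i * (z i ^ 2 - S i i)
      = ⟪z, toEuclideanCLM (𝕜 := ℝ) (diagonal w) z⟫ - (diagonal w * S).trace := by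
  simp only [inner_toEuclideanCLM, dotProduct, mulVec_diagonal, trace, diag_apply, diagonal_mul,
    ← sum_sub_distrib]
  exact sum_congr rfl fun i _ => by ring

lemma integral_sum_mul_sq_sub_pow_multivariateGaussian_le {S : Matrix ι ι ℝ} {b L : ℝ}
    (hS : S.PosSemidef) (hSb : (b • 1 - S).PosSemidef) {w : ι → ℝ} (hw : ∀ i, |w i| ≤ L)
    (m : ℕ) :
    ∫ z, (∑ i, w i * (z i ^ 2 - S i i)) ^ (2 * m) ∂multivariateGaussian 0 S
      ≤ gaussianChaosConst m * (L ^ 2 * (Fintype.card ι * b ^ 2)) ^ m := by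
  have hW : (diagonal w).IsHermitian := isHermitian_diagonal w
  have htrace_nonneg : 0 ≤ (diagonal w * S * (diagonal w * S)).trace := by
    rw [← mul_assoc]
    refine trace_mul_nonneg_of_posSemidef ?_ hS
    simpa only [hW.eq] using hS.conjTranspose_mul_mul_same (diagonal w)
  have htrace_le : (diagonal w * S * (diagonal w * S)).trace
      ≤ L ^ 2 * (Fintype.card ι * b ^ 2) :=
    (trace_diagonal_mul_mul_self_le hS.isHermitian hw).trans
      (mul_le_mul_of_nonneg_left (trace_mul_self_le_card_mul_sq hS hSb) (sq_nonneg L))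
  simp only [sum_mul_sq_sub_eq_inner_sub_trace]
  exact (integral_inner_sub_trace_pow_multivariateGaussian_le hS hW m).trans
    (mul_le_mul_of_nonneg_left (pow_le_pow_left₀ htrace_nonneg htrace_le m)
      (gaussianChaosConst_pos m).le)

lemma IsGaussianVec.map_toLp_eq_multivariateGaussian {Ω : Type*} [MeasureSpace Ω]
    [IsProbabilityMeasure (ℙ : Measure Ω)] {p : ℕ} {Z : Ω → Fin p → ℝ}
    {S : Matrix (Fin p) (Fin p) ℝ} (hG : IsGaussianVec Z S) (hZ : AEMeasurable Z)
    (hS : S.PosSemidef) :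
    Measure.map (fun ω => toLp 2 (Z ω)) ℙ = multivariateGaussian 0 S := by
  have hZ' : AEMeasurable fun ω => toLp 2 (Z ω) := by fun_prop
  have := Measure.isProbabilityMeasure_map hZ'
  apply Measure.ext_of_charFun
  ext t
  have hvar : ∑ i, ∑ j, t i * S i j * t j = t ⬝ᵥ S *ᵥ t := by
    simp only [dotProduct, mulVec, mul_sum, mul_assoc]
  have hvar_nonneg : 0 ≤ t ⬝ᵥ S *ᵥ t := hS.dotProduct_mulVec_nonneg t
  have hline : charFun (Measure.map (fun ω => toLp 2 (Z ω)) ℙ) t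
      = charFun (Measure.map (fun ω => ∑ i, t i * Z ω i) ℙ) 1 := by
    rw [charFun_apply, charFun_apply_real, integral_map hZ' (by fun_prop),
      integral_map (by fun_prop) (by fun_prop)]
    simp [PiLp.inner_apply]
  rw [hline, hG, charFun_gaussianReal, charFun_multivariateGaussian hS, hvar,
    Real.coe_toNNReal _ hvar_nonneg]
  simp

end

section

variable {ι : Type*} [Fintype ι]

/-- The coefficient of `y i` in `∑ i, ∑ j, B i j * (S i i * y j + S j j * y i)`; with
`y i = z i ^ 2 - S i i` it is the weight of the `i`-th centered square in the statistic `U`. -/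
def centeredSqWeight (B S : Matrix ι ι ℝ) (i : ι) : ℝ := ∑ j, (B i j + B j i) * S j j

lemma sum_sum_mul_add_eq_sum_centeredSqWeight_mul (B S : Matrix ι ι ℝ) (y : ι → ℝ) :
    ∑ i, ∑ j, B i j * (S i i * y j + S j j * y i) = ∑ i, centeredSqWeight B S i * y i := by
  have hswap : ∑ i, ∑ j, B i j * (S i i * y j) = ∑ i, ∑ j, B j i * (S j j * y i) := sum_comm
  simp only [mul_add, sum_add_distrib, hswap]
  simp only [← sum_add_distrib, centeredSqWeight, sum_mul]
  exact sum_congr rfl fun i _ => sum_congr rfl fun j _ => by ring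

end

lemma card_filter_natAbs_sub_lt_le {p : ℕ} (τ : ℕ) (i : Fin p) :
    #{j : Fin p | ((i : ℤ) - (j : ℤ)).natAbs < τ} ≤ 2 * τ := by
  have hcard : #{j : Fin p | ((i : ℤ) - (j : ℤ)).natAbs < τ} ≤ #(Ioc ((i : ℤ) - τ) (i + τ)) := by
    refine card_le_card_of_injOn (fun j : Fin p => (j : ℤ)) (fun j hj => ?_) ?_
    · have hj' := (mem_filter.1 hj).2
      simp only [coe_Ioc, Set.mem_Ioc]
      omega
    · exact fun j _ k _ hjk => Fin.ext (Int.ofNat_inj.1 hjk)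
  rw [Int.card_Ioc] at hcard
  omega

lemma abs_sum_le_of_eq_zero_off_band {p τ : ℕ} (i : Fin p) {f : Fin p → ℝ} {c : ℝ}
    (hf : ∀ j, |f j| ≤ c) (hband : ∀ j : Fin p, τ ≤ ((i : ℤ) - (j : ℤ)).natAbs → f j = 0) :
    |∑ j, f j| ≤ 2 * τ * c := by
  have hc : 0 ≤ c := (abs_nonneg _).trans (hf i)
  have hsupp : ∑ j, f j = ∑ j ∈ {j : Fin p | ((i : ℤ) - (j : ℤ)).natAbs < τ}, f j :=
    (sum_filter_of_ne fun j _ hj => not_le.1 fun h => hj (hband j h)).symm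
  calc |∑ j, f j| ≤ ∑ j ∈ {j : Fin p | ((i : ℤ) - (j : ℤ)).natAbs < τ}, |f j| :=
        hsupp ▸ abs_sum_le_sum_abs _ _
    _ ≤ #{j : Fin p | ((i : ℤ) - (j : ℤ)).natAbs < τ} * c := by
        simpa only [nsmul_eq_mul] using sum_le_card_nsmul _ _ c fun j _ => hf j
    _ ≤ (2 * τ : ℕ) * c := by
        gcongr
        exact card_filter_natAbs_sub_lt_le τ i
    _ = 2 * τ * c := by push_cast; rfl

lemma abs_centeredSqWeight_le {p τ : ℕ} {B S : Matrix (Fin p) (Fin p) ℝ} {c b : ℝ}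
    (hB : ∀ i j, |B i j| ≤ c)
    (hband : ∀ i j : Fin p, τ ≤ ((i : ℤ) - (j : ℤ)).natAbs → B i j = 0)
    (hS : ∀ j, |S j j| ≤ b) (i : Fin p) : |centeredSqWeight B S i| ≤ 4 * τ * c * b := by
  have hterm (j : Fin p) : |(B i j + B j i) * S j j| ≤ 2 * c * b := by
    rw [abs_mul]
    refine mul_le_mul ?_ (hS j) (abs_nonneg _) ?_
    · linarith [abs_add_le (B i j) (B j i), hB i j, hB j i]
    · linarith [abs_nonneg (B i j), hB i j]
  have hzero (j : Fin p) (hj : τ ≤ ((i : ℤ) - (j : ℤ)).natAbs) :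
      (B i j + B j i) * S j j = 0 := by
    rw [hband i j hj, hband j i (by omega), add_zero, zero_mul]
  calc |centeredSqWeight B S i| ≤ 2 * τ * (2 * c * b) :=
        abs_sum_le_of_eq_zero_off_band i hterm hzero
    _ = 4 * τ * c * b := by ring

theorem stmt13_general {p n τ : ℕ} (hn : 0 < n) {M₀ Cn : ℝ} {K₀ : ℕ} (hKeven : Even K₀)
    {S : Matrix (Fin p) (Fin p) ℝ} (hS : S.PosSemidef) (hSM₀ : (M₀ • 1 - S).PosSemidef)
    {B : Matrix (Fin p) (Fin p) ℝ} (hB : ∀ i j, |B i j| ≤ Cn)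
    (hband : ∀ i j : Fin p, (τ : ℤ) ≤ ((i : ℤ) - (j : ℤ)).natAbs → B i j = 0)
    {Ω : Type*} [MeasureSpace Ω] [IsProbabilityMeasure (ℙ : Measure Ω)]
    {Z : Ω → Fin p → ℝ} (hZ : AEMeasurable Z) (hG : IsGaussianVec Z S) :
    (∫ ω, ((1 / (n : ℝ) ^ 2) * ∑ i : Fin p, ∑ j : Fin p,
        B i j * (S i i * (Z ω j ^ 2 - S j j) + S j j * (Z ω i ^ 2 - S i i))) ^ K₀ ∂ℙ)
      ≤ gaussianChaosConst (K₀ / 2) * (4 * M₀ ^ 2) ^ K₀ * (Cn * τ) ^ K₀ * (p : ℝ) ^ (K₀ / 2)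
        / (n : ℝ) ^ (2 * K₀) := by
  obtain ⟨m, rfl⟩ := hKeven.two_dvd
  have hdiag (j : Fin p) : |S j j| ≤ M₀ := by
    rw [abs_of_nonneg hS.diag_nonneg]
    simpa using hSM₀.diag_nonneg (i := j)
  have hweight := abs_centeredSqWeight_le hB (fun i j h => hband i j (mod_cast h)) hdiag
  have hmoment := integral_sum_mul_sq_sub_pow_multivariateGaussian_le hS hSM₀ hweight m
  rw [← hG.map_toLp_eq_multivariateGaussian hZ hS,
    integral_map (by fun_prop) (by fun_prop)] at hmoment
  calc ∫ ω, ((1 / (n : ℝ) ^ 2) * ∑ i : Fin p, ∑ j : Fin p,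
        B i j * (S i i * (Z ω j ^ 2 - S j j) + S j j * (Z ω i ^ 2 - S i i))) ^ (2 * m) ∂ℙ
      = (∫ ω, (∑ i, centeredSqWeight B S i * (Z ω i ^ 2 - S i i)) ^ (2 * m) ∂ℙ)
          / (n : ℝ) ^ (2 * (2 * m)) := by
        simp only [sum_sum_mul_add_eq_sum_centeredSqWeight_mul B S fun i => Z _ i ^ 2 - S i i,
          one_div_mul_eq_div, div_pow, ← pow_mul]
        exact integral_div _ _
    _ ≤ gaussianChaosConst m * ((4 * τ * Cn * M₀) ^ 2 * (p * M₀ ^ 2)) ^ m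
          / (n : ℝ) ^ (2 * (2 * m)) := by
        rw [div_le_div_iff_of_pos_right (by positivity)]
        simpa only [Fintype.card_fin] using hmoment
    _ = _ := by
        rw [Nat.mul_div_cancel_left m two_pos, pow_mul (4 * M₀ ^ 2), pow_mul (Cn * τ)]
        simp only [mul_pow]
        ring

/-- For `Z ∼ N_p(0,Σ)` with `Σ ∈ 𝓕_α`, coefficients `0 ≤ B̄_ij ≤ C_n` vanishing
for `|i-j| ≥ τ`, and
`U = n⁻² ∑_{i,j} B̄_ij (σ_ii(z_j²−σ_jj) + σ_jj(z_i²−σ_ii))`, for any even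
`K₀ ≥ 2` there is `C` with `𝔼 U^{K₀} ≤ C (C_n τ)^{K₀} p^{K₀/2}/n^{2K₀}`. -/
theorem stmt13 (M M₀ α : ℝ) (hM : 0 < M) (hM₀ : 0 < M₀) (hα : 0 < α)
    (K₀ : ℕ) (hK : 2 ≤ K₀) (hKeven : Even K₀) :
    ∃ C : ℝ, 0 < C ∧
      ∀ (p n τ : ℕ), 3 ≤ n → 1 ≤ τ → τ ≤ p →
      ∀ (Cn : ℝ), 0 ≤ Cn →
      ∀ (S : Matrix (Fin p) (Fin p) ℝ), S.IsSymm →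
        (∀ v : Fin p → ℝ, 0 ≤ ∑ i, ∑ j, v i * S i j * v j) →
        (∀ v : Fin p → ℝ, ∑ i, ∑ j, v i * S i j * v j ≤ M₀ * ∑ i, v i ^ 2) →
        (∀ k : ℕ, 1 ≤ k → ∀ j : Fin p,
            ∑ i ∈ Finset.univ.filter
                (fun i : Fin p => k < ((i : ℤ) - (j : ℤ)).natAbs),
              |S i j| ≤ M * (k : ℝ) ^ (-α)) →
      ∀ (B : Matrix (Fin p) (Fin p) ℝ),
        (∀ i j, 0 ≤ B i j ∧ B i j ≤ Cn) →
        (∀ i j : Fin p, (τ : ℤ) ≤ ((i : ℤ) - (j : ℤ)).natAbs → B i j = 0) →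
      ∀ (Ω : Type) (_ : MeasureSpace Ω)
        (_ : IsProbabilityMeasure (ℙ : Measure Ω))
        (Z : Ω → Fin p → ℝ), Measurable Z → IsGaussianVec Z S →
      (∫ ω, ((1 / (n : ℝ) ^ 2) * ∑ i : Fin p, ∑ j : Fin p,
            B i j * (S i i * (Z ω j ^ 2 - S j j) + S j j * (Z ω i ^ 2 - S i i))) ^ K₀ ∂ℙ)
        ≤ C * (Cn * τ) ^ K₀ * (p : ℝ) ^ (K₀ / 2) / (n : ℝ) ^ (2 * K₀) := by
  refine ⟨gaussianChaosConst (K₀ / 2) * (4 * M₀ ^ 2) ^ K₀,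
    mul_pos (gaussianChaosConst_pos _) (by positivity), ?_⟩
  intro p n τ hn _ _ Cn _ S hS hpos hM₀S _ B hB hband Ω _ _ Z hZ hG
  exact stmt13_general (by omega) hKeven (posSemidef_of_isSymm_of_sum_nonneg hS hpos)
    (posSemidef_smul_one_sub_of_isSymm_of_sum_le hS hM₀S)
    (fun i j => (abs_of_nonneg (hB i j).1).trans_le (hB i j).2) hband hZ.aemeasurable hG
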